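/- arXiv:0812.0066 — 4 statements merged into one kernel-verified Lean document; each statement's English description precedes it below -/
import Mathlib

section
/- Let Q ∈ ℂ, Q ≠ 0, and let y₁,y₂,y₃ ∈ ℂ be nonzero with y₁⁴ = Q², y₂ = y₁³/Q and y₃ = y₁²/Q. Then D₁ = D₂ = D₃ = 0, where D₁ = −Q/y₁² + y₃ − Q/(y₁²y₃) + 1, D₂ = y₃ − Q/y₂² + 1 − Q/(y₂²y₃), D₃ = y₁ + y₂ − Q/(y₁y₃²) − Q/(y₂y₃²). There are exactly four such triples (y₁,y₂,y₃) for each fixed Q. -/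
/-- The triples `(y₁, y₂, y₃)` with `y₁⁴ = Q²`, `y₂ = y₁³/Q`, `y₃ = y₁²/Q` are critical points
of the potential function (the partial derivatives `D₁, D₂, D₃` vanish), and for each fixed
`Q ≠ 0` there are exactly four such triples. -/
theorem nondegenerate_critical_points (Q : ℂ) (hQ : Q ≠ 0) :
    (∀ y₁ y₂ y₃ : ℂ, y₁ ≠ 0 → y₂ ≠ 0 → y₃ ≠ 0 →
      y₁ ^ 4 = Q ^ 2 → y₂ = y₁ ^ 3 / Q → y₃ = y₁ ^ 2 / Q →
        -Q / y₁ ^ 2 + y₃ - Q / (y₁ ^ 2 * y₃) + 1 = 0 ∧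
        y₃ - Q / y₂ ^ 2 + 1 - Q / (y₂ ^ 2 * y₃) = 0 ∧
        y₁ + y₂ - Q / (y₁ * y₃ ^ 2) - Q / (y₂ * y₃ ^ 2) = 0) ∧
    ({p : ℂ × ℂ × ℂ | p.1 ≠ 0 ∧ p.2.1 ≠ 0 ∧ p.2.2 ≠ 0 ∧
        p.1 ^ 4 = Q ^ 2 ∧ p.2.1 = p.1 ^ 3 / Q ∧ p.2.2 = p.1 ^ 2 / Q}).ncard = 4 := by
  constructor
  · intro y₁ y₂ y₃ h1 h2 h3 h4 e2 e3
    have h5 : (y₁ ^ 2 - Q) * (y₁ ^ 2 + Q) = 0 := by linear_combination h4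
    rcases mul_eq_zero.mp h5 with h | h
    · obtain rfl : Q = y₁ ^ 2 := by linear_combination -h
      obtain rfl : y₃ = 1 := by rw [e3]; field_simp
      obtain rfl : y₂ = y₁ := by rw [e2]; field_simp
      refine ⟨?_, ?_, ?_⟩ <;> field_simp <;> ring
    · obtain rfl : Q = -y₁ ^ 2 := by linear_combination h
      obtain rfl : y₃ = -1 := by rw [e3]; field_simp
      obtain rfl : y₂ = -y₁ := by rw [e2]; field_simp
      refine ⟨?_, ?_, ?_⟩ <;> field_simp <;> ring
  · obtain ⟨s, rfl⟩ : ∃ s : ℂ, Q = s ^ 2 := by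
      obtain ⟨s, hs⟩ := IsAlgClosed.exists_pow_nat_eq Q (n := 2) (by norm_num)
      exact ⟨s, hs.symm⟩
    have hs : s ≠ 0 := by rintro rfl; simp at hQ
    have hI : Complex.I ^ 2 = -1 := Complex.I_sq
    have hI0 := Complex.I_ne_zero
    let f : ℂ → ℂ × ℂ × ℂ := fun y => (y, y ^ 3 / s ^ 2, y ^ 2 / s ^ 2)
    have hf : Function.Injective f := fun a b h => congrArg Prod.fst h
    have key : {p : ℂ × ℂ × ℂ | p.1 ≠ 0 ∧ p.2.1 ≠ 0 ∧ p.2.2 ≠ 0 ∧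
        p.1 ^ 4 = (s ^ 2) ^ 2 ∧ p.2.1 = p.1 ^ 3 / s ^ 2 ∧ p.2.2 = p.1 ^ 2 / s ^ 2}
        = f '' (({s, -s, Complex.I * s, -(Complex.I * s)} : Finset ℂ) : Set ℂ) := by
      ext ⟨a, b, c⟩
      simp only [Set.mem_setOf_eq, Set.mem_image, Finset.mem_coe, Finset.mem_insert,
        Finset.mem_singleton, f, Prod.mk.injEq]
      constructor
      · rintro ⟨-, -, -, h4, hb, hc⟩
        refine ⟨a, ?_, rfl, hb.symm, hc.symm⟩
        have : (a - s) * ((a + s) * ((a - Complex.I * s) * (a + Complex.I * s))) = 0 := by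
          linear_combination h4 + (s ^ 4 - a ^ 2 * s ^ 2) * hI
        simp only [mul_eq_zero] at this
        rcases this with h | h | h | h
        · exact Or.inl (by linear_combination h)
        · exact Or.inr (Or.inl (by linear_combination h))
        · exact Or.inr (Or.inr (Or.inl (by linear_combination h)))
        · exact Or.inr (Or.inr (Or.inr (by linear_combination h)))
      · rintro ⟨y, hy, rfl, rfl, rfl⟩
        have h4 : y ^ 4 = (s ^ 2) ^ 2 := by
          rcases hy with rfl | rfl | rfl | rfl
          · ring
          · ring
          · linear_combination s ^ 4 * (Complex.I ^ 2 - 1) * hI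
          · linear_combination s ^ 4 * (Complex.I ^ 2 - 1) * hI
        have hy0 : y ≠ 0 := by
          rintro rfl
          apply hs
          have : (s ^ 2) ^ 2 = 0 := by rw [← h4]; norm_num
          simpa using this
        exact ⟨hy0, by positivity, by positivity, h4, rfl, rfl⟩
    rw [key, Set.ncard_image_of_injective _ hf, Set.ncard_coe_finset]
    have n1 : s ≠ -s := fun h => hs (by linear_combination h / 2)
    have two : ∀ z : ℂ, z ^ 2 = -1 → s ≠ z * s := fun z hz h => by
      apply hs
      have h2 : s ^ 2 = 0 := by
        linear_combination (s + z * s) / 2 * h + s ^ 2 / 2 * hz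
      simpa using h2
    have n2 := two Complex.I hI
    have n3 : s ≠ -(Complex.I * s) := by
      have := two (-Complex.I) (by linear_combination hI)
      simpa using this
    have n4 : -s ≠ Complex.I * s := fun h => n3 (by linear_combination -h)
    have n5 : -s ≠ -(Complex.I * s) := fun h => n2 (by linear_combination -h)
    have n6 : Complex.I * s ≠ -(Complex.I * s) := fun h =>
      (mul_ne_zero hI0 hs) (by linear_combination h / 2)
    rw [Finset.card_insert_of_notMem, Finset.card_insert_of_notMem,
      Finset.card_insert_of_notMem, Finset.card_singleton]
    · simpa only [Finset.mem_singleton] using n6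
    · simp only [Finset.mem_insert, Finset.mem_singleton, not_or]; exact ⟨n4, n5⟩
    · simp only [Finset.mem_insert, Finset.mem_singleton, not_or]; exact ⟨n1, n2, n3⟩
end

section
/- Let Q ∈ ℂ, Q ≠ 0, and let y₁,y₂,y₃ ∈ ℂ be nonzero. Set D₁ = −Q/y₁² + y₃ − Q/(y₁²y₃) + 1, D₂ = y₃ − Q/y₂² + 1 − Q/(y₂²y₃), D₃ = y₁ + y₂ − Q/(y₁y₃²) − Q/(y₂y₃²). Then D₁ = D₂ = D₃ = 0 holds if and only if one of the following holds: (i) y₂ = −y₁ and y₃ = −1; (ii) y₂ = −y₁ and y₃ = Q/y₁²; (iii) y₂ = Q/y₁ and y₃ = −1; (iv) y₁⁴ = Q², y₂ = y₁³/Q and y₃ = y₁²/Q. -/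
/-- Complete classification of the critical points of the potential function: for nonzero
`Q, y₁, y₂, y₃`, the partial derivatives `D₁, D₂, D₃` all vanish if and only if one of the
three one-parameter families or the four non-degenerate critical points occurs. -/
theorem critical_points_classification (Q y₁ y₂ y₃ : ℂ) (hQ : Q ≠ 0)
    (h₁ : y₁ ≠ 0) (h₂ : y₂ ≠ 0) (h₃ : y₃ ≠ 0) :
    (-Q / y₁ ^ 2 + y₃ - Q / (y₁ ^ 2 * y₃) + 1 = 0 ∧
     y₃ - Q / y₂ ^ 2 + 1 - Q / (y₂ ^ 2 * y₃) = 0 ∧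
     y₁ + y₂ - Q / (y₁ * y₃ ^ 2) - Q / (y₂ * y₃ ^ 2) = 0) ↔
    ((y₂ = -y₁ ∧ y₃ = -1) ∨
     (y₂ = -y₁ ∧ y₃ = Q / y₁ ^ 2) ∨
     (y₂ = Q / y₁ ∧ y₃ = -1) ∨
     (y₁ ^ 4 = Q ^ 2 ∧ y₂ = y₁ ^ 3 / Q ∧ y₃ = y₁ ^ 2 / Q)) := by
  have e1 : -Q / y₁ ^ 2 + y₃ - Q / (y₁ ^ 2 * y₃) + 1
      = (1 + y₃) * (y₁ ^ 2 * y₃ - Q) / (y₁ ^ 2 * y₃) := by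
    field_simp
    ring
  have e2 : y₃ - Q / y₂ ^ 2 + 1 - Q / (y₂ ^ 2 * y₃)
      = (1 + y₃) * (y₂ ^ 2 * y₃ - Q) / (y₂ ^ 2 * y₃) := by
    field_simp
    ring
  have e3 : y₁ + y₂ - Q / (y₁ * y₃ ^ 2) - Q / (y₂ * y₃ ^ 2)
      = (y₁ + y₂) * (y₁ * y₂ * y₃ ^ 2 - Q) / (y₁ * y₂ * y₃ ^ 2) := by
    field_simp
    ring
  have n1 : y₁ ^ 2 * y₃ ≠ 0 := by simp [h₁, h₃]
  have n2 : y₂ ^ 2 * y₃ ≠ 0 := by simp [h₂, h₃]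
  have n3 : y₁ * y₂ * y₃ ^ 2 ≠ 0 := by simp [h₁, h₂, h₃]
  rw [e1, e2, e3, div_eq_zero_iff, div_eq_zero_iff, div_eq_zero_iff]
  simp only [n1, n2, n3, or_false]
  rw [eq_div_iff (pow_ne_zero 2 h₁), eq_div_iff h₁, eq_div_iff hQ, eq_div_iff hQ]
  constructor
  · rintro ⟨a, b, c⟩
    by_cases h : y₃ = -1
    · subst h
      rcases mul_eq_zero.1 c with c | c
      · exact Or.inl ⟨by linear_combination c, rfl⟩
      · exact Or.inr (Or.inr (Or.inl ⟨by linear_combination c, rfl⟩))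
    · have h' : 1 + y₃ ≠ 0 := fun k => h (by linear_combination k)
      have a := (mul_eq_zero.1 a).resolve_left h'
      have b := (mul_eq_zero.1 b).resolve_left h'
      by_cases k : y₂ = -y₁
      · exact Or.inr (Or.inl ⟨k, by linear_combination a⟩)
      · have k' : y₁ + y₂ ≠ 0 := fun l => k (by linear_combination l)
        have c := (mul_eq_zero.1 c).resolve_left k'
        have d : y₃ * (y₁ + y₂) * (y₂ - y₁) = 0 := by linear_combination b - a
        have d := (mul_eq_zero.1 d).resolve_left (mul_ne_zero h₃ k')
        have d : y₂ = y₁ := by linear_combination d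
        subst d
        have f : y₂ ^ 2 * y₃ * (y₃ - 1) = 0 := by linear_combination c - a
        have f := (mul_eq_zero.1 f).resolve_left n1
        have f : y₃ = 1 := by linear_combination f
        subst f
        have g : Q = y₂ ^ 2 := by linear_combination -a
        subst g
        exact Or.inr (Or.inr (Or.inr ⟨by ring, by ring, by ring⟩))
  · rintro (⟨a, b⟩ | ⟨a, b⟩ | ⟨a, b⟩ | ⟨a, b, c⟩)
    · subst a b
      simp
    · subst a
      refine ⟨?_, ?_, ?_⟩
      · linear_combination (1 + y₃) * b
      · linear_combination (1 + y₃) * b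
      · ring
    · subst b
      refine ⟨by ring, by ring, ?_⟩
      linear_combination (y₁ + y₂) * a
    · have d : (y₁ ^ 2 - Q) * (y₁ ^ 2 + Q) = 0 := by linear_combination a
      rcases mul_eq_zero.1 d with d | d
      · have f : y₃ = 1 := mul_right_cancel₀ hQ (by linear_combination c + d)
        have g : y₂ = y₁ := mul_right_cancel₀ hQ (by linear_combination b + y₁ * d)
        subst f g
        refine ⟨?_, ?_, ?_⟩
        · linear_combination 2 * d
        · linear_combination 2 * d
        · linear_combination 2 * y₂ * d
      · have f : y₃ = -1 := mul_right_cancel₀ hQ (by linear_combination c + d)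
        have g : y₂ = -y₁ := mul_right_cancel₀ hQ (by linear_combination b + y₁ * d)
        subst f g
        simp
end

section
/- Fix n ≥ 4 and λ > 0. For x ∈ ℂⁿ \ {0} with ‖x‖² = ∑_{i=1}^n |xᵢ|², define ν₂(x) = i·λ·(x₁·conj(x₂) − conj(x₁)·x₂)/‖x‖² (a real number) and ν_k(x) = λ·∑_{i=1}^k |xᵢ|² / ‖x‖² for k = 3, …, n−1. Then the image of the set {x ∈ ℂⁿ \ {0} : x₁² + x₂² + x₃² = 0} under the map (ν₂, ν₃, …, ν_{n−1}) equals the polytope {(u₂, …, u_{n−1}) ∈ ℝ^{n−2} : λ ≥ u_{n−1} ≥ u_{n−2} ≥ ⋯ ≥ u₃ ≥ |u₂|}. -/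
open Complex Finset


lemma aux_sum_filter (n m : ℕ) (hm : m ≤ n) (f : ℕ → ℝ) :
    ∑ i ∈ univ.filter (fun i : Fin n => i.val < m), f i.val = ∑ i ∈ range m, f i := by
  refine Finset.sum_bij (fun i _ => i.val) ?_ ?_ ?_ ?_
  · intro a ha
    simpa using ha
  · intro a _ b _ h
    exact Fin.ext h
  · intro b hb
    have hb' : b < m := by simpa using hb
    exact ⟨⟨b, by omega⟩, by simpa using hb', rfl⟩
  · intro a _
    rfl

lemma aux_solve (s t : ℝ) (h : |t| ≤ s) :
    ∃ r c d : ℝ, 2 * r * c = t ∧ r ^ 2 = c ^ 2 + d ^ 2 ∧ r ^ 2 + c ^ 2 + d ^ 2 = s := by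
  have hs : 0 ≤ s := le_trans (abs_nonneg t) h
  rcases hs.eq_or_lt with h0 | h0
  · subst h0
    have : t = 0 := by simpa using h
    exact ⟨0, 0, 0, by simp [this]⟩
  · have hr : 0 < √(s / 2) := Real.sqrt_pos.mpr (by linarith)
    have hr2 : √(s / 2) ^ 2 = s / 2 := Real.sq_sqrt (by linarith)
    have hts : t ^ 2 ≤ s ^ 2 := by
      rw [← sq_abs t]
      exact pow_le_pow_left₀ (abs_nonneg t) h 2
    have hc : (t / (2 * √(s / 2))) ^ 2 ≤ s / 2 := by
      rw [div_pow, mul_pow, hr2, div_le_iff₀ (by linarith)]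
      nlinarith
    have hd := Real.sq_sqrt (sub_nonneg.mpr hc)
    refine ⟨√(s / 2), t / (2 * √(s / 2)), √(s / 2 - (t / (2 * √(s / 2))) ^ 2), ?_, ?_, ?_⟩
    · field_simp
    · rw [hd, hr2]; ring
    · rw [hr2]; linarith

/-- For `n ≥ 4` and `λ > 0`, the image of
`{x ∈ ℂⁿ \ {0} : x₁² + x₂² + x₃² = 0}` under the moment map `(ν₂, ν₃, …, ν_{n−1})`,
where `ν₂(x) = iλ(x₁ conj(x₂) − conj(x₁) x₂)/‖x‖²` and
`ν_k(x) = λ ∑_{i≤k} |xᵢ|² / ‖x‖²` for `3 ≤ k ≤ n−1`, equals the Gelfand–Cetlin polytope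
`{u ∈ ℝ^{n−2} : λ ≥ u_{n−1} ≥ ⋯ ≥ u₃ ≥ |u₂|}`. -/
theorem moment_map_image_eq_gelfand_cetlin_polytope (n : ℕ) (hn : 4 ≤ n) (lam : ℝ)
    (hlam : 0 < lam) :
    (fun x : Fin n → ℂ => fun j : Fin (n - 2) =>
        if j.val = 0 then
          (Complex.I * (lam : ℂ) *
              (x ⟨0, by omega⟩ * (starRingEnd ℂ) (x ⟨1, by omega⟩) -
                (starRingEnd ℂ) (x ⟨0, by omega⟩) * x ⟨1, by omega⟩)).re /
            ∑ i : Fin n, normSq (x i)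
        else
          lam * (∑ i ∈ univ.filter (fun i : Fin n => i.val < j.val + 2), normSq (x i)) /
            ∑ i : Fin n, normSq (x i)) ''
      {x : Fin n → ℂ | x ≠ 0 ∧
        x ⟨0, by omega⟩ ^ 2 + x ⟨1, by omega⟩ ^ 2 + x ⟨2, by omega⟩ ^ 2 = 0} =
    {u : Fin (n - 2) → ℝ |
      u ⟨n - 3, by omega⟩ ≤ lam ∧
      (∀ (j : ℕ) (_ : 1 ≤ j) (h : j + 1 < n - 2), u ⟨j, by omega⟩ ≤ u ⟨j + 1, h⟩) ∧
      |u ⟨0, by omega⟩| ≤ u ⟨1, by omega⟩} := by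
  ext u
  constructor
  · rintro ⟨x, ⟨hx0, hx⟩, rfl⟩
    have hN : 0 ≤ ∑ i : Fin n, normSq (x i) := Finset.sum_nonneg fun i _ => normSq_nonneg _
    refine ⟨?_, ?_, ?_⟩
    · have h3 : n - 3 ≠ 0 := by omega
      simp only [h3, if_false]
      rw [mul_div_assoc]
      refine mul_le_of_le_one_right hlam.le (div_le_one_of_le₀ ?_ hN)
      exact Finset.sum_le_sum_of_subset_of_nonneg (Finset.filter_subset _ _)
        fun i _ _ => normSq_nonneg _
    · intro j hj h
      have h3 : j ≠ 0 := by omega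
      simp only [h3, if_false, Nat.add_eq_zero_iff, one_ne_zero, and_false]
      refine div_le_div_of_nonneg_right (mul_le_mul_of_nonneg_left ?_ hlam.le) hN
      refine Finset.sum_le_sum_of_subset_of_nonneg ?_ fun i _ _ => normSq_nonneg _
      intro i
      simp only [Finset.mem_filter, Finset.mem_univ, true_and]
      omega
    · simp only [if_true, one_ne_zero, if_false]
      rw [abs_div, abs_of_nonneg hN]
      refine div_le_div_of_nonneg_right ?_ hN
      have hsub : normSq (x ⟨0, by omega⟩) + normSq (x ⟨1, by omega⟩) ≤
          ∑ i ∈ univ.filter (fun i : Fin n => i.val < 1 + 2), normSq (x i) := by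
        rw [← Finset.sum_pair (f := fun i => normSq (x i)) (by simp)]
        refine Finset.sum_le_sum_of_subset_of_nonneg ?_ fun i _ _ => normSq_nonneg _
        intro i hi
        simp only [Finset.mem_insert, Finset.mem_singleton] at hi
        rcases hi with rfl | rfl <;> simp
      refine le_trans ?_ (mul_le_mul_of_nonneg_left hsub hlam.le)
      generalize x ⟨0, by omega⟩ = a
      generalize x ⟨1, by omega⟩ = b
      have e : (Complex.I * (lam : ℂ) * (a * (starRingEnd ℂ) b - (starRingEnd ℂ) a * b)).re
          = lam * (2 * (a.re * b.im - a.im * b.re)) := by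
        simp
        ring
      rw [e, abs_mul, abs_of_pos hlam]
      refine mul_le_mul_of_nonneg_left ?_ hlam.le
      rw [normSq_apply, normSq_apply, abs_le]
      constructor
      · nlinarith [sq_nonneg (a.re + b.im), sq_nonneg (a.im - b.re)]
      · nlinarith [sq_nonneg (a.re - b.im), sq_nonneg (a.im + b.re)]
  · rintro ⟨h1, h2, h3⟩
    obtain ⟨r, c, d, e1, e2, e3⟩ := aux_solve _ _ h3
    let U : ℕ → ℝ := fun j => if h : j < n - 2 then u ⟨j, h⟩ else lam
    have hU : ∀ j (h : j < n - 2), U j = u ⟨j, h⟩ := fun j h => dif_pos h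
    have hUl : U (n - 2) = lam := dif_neg (lt_irrefl _)
    have hmono : ∀ j, 1 ≤ j → j + 1 ≤ n - 2 → U j ≤ U (j + 1) := by
      intro j hj hj2
      rcases hj2.eq_or_lt with h | h
      · have : j = n - 3 := by omega
        rw [h, hUl, hU j (by omega)]
        subst this
        exact h1
      · rw [hU j (by omega), hU (j + 1) h]
        exact h2 j hj h
    let y : ℕ → ℂ := fun k => if k = 0 then (r : ℂ) else if k = 1 then c * I else
      if k = 2 then d * I else ((√(U (k - 1) - U (k - 2)) : ℝ) : ℂ)
    have y0 : y 0 = r := by simp [y]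
    have y1 : y 1 = c * I := by simp [y]
    have y2 : y 2 = d * I := by simp [y]
    have hsum : ∀ m, m + 3 ≤ n → ∑ i ∈ range (m + 3), normSq (y i) = U (m + 1) := by
      intro m
      induction m with
      | zero =>
        intro hm
        rw [Finset.sum_range_succ, Finset.sum_range_succ, Finset.sum_range_succ, y0, y1, y2,
          hU _ (by omega)]
        simp only [Finset.sum_range_zero, normSq_mul, normSq_ofReal, normSq_I]
        linarith
      | succ m ih =>
        intro hm
        rw [show m + 1 + 3 = (m + 3) + 1 by ring, Finset.sum_range_succ, ih (by omega)]
        have hy : y (m + 3) = ((√(U (m + 2) - U (m + 1)) : ℝ) : ℂ) := by simp [y]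
        have := hmono (m + 1) (by omega) (by omega)
        rw [hy, normSq_ofReal, Real.mul_self_sqrt (by linarith)]
        ring
    have htot : ∑ i : Fin n, normSq (y i.val) = lam := by
      rw [Fin.sum_univ_eq_sum_range (fun i => normSq (y i))]
      have := hsum (n - 3) (by omega)
      rw [show n - 3 + 3 = n by omega, show n - 3 + 1 = n - 2 by omega, hUl] at this
      exact this
    refine ⟨fun i => y i.val, ⟨?_, ?_⟩, ?_⟩
    · intro h0
      have : ∀ i : Fin n, y i.val = 0 := fun i => congrFun h0 i
      simp [this] at htot
      linarith
    · simp only [y0, y1, y2]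
      have : ((r ^ 2 : ℝ) : ℂ) = ((c ^ 2 + d ^ 2 : ℝ) : ℂ) := by rw [e2]
      push_cast at this
      rw [mul_pow, mul_pow, I_sq, this]
      ring
    · funext j
      simp only [htot]
      split_ifs with hj
      · have : j = ⟨0, by omega⟩ := Fin.ext hj
        rw [this]
        rw [y0, y1, div_eq_iff hlam.ne', ← e1]
        simp
        ring
      · rw [mul_div_assoc, mul_div_cancel₀ _ hlam.ne',
          aux_sum_filter n _ (by omega) (fun i => normSq (y i))]
        have := hsum (j.val - 1) (by omega)
        rw [show j.val - 1 + 3 = j.val + 2 by omega, show j.val - 1 + 1 = j.val by omega,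
          hU _ j.isLt] at this
        exact this
end

section
/- Consider the map s : ℙ¹ → ℙ³ sending [z₀:z₁] to [|z₀|²−|z₁|² : −2·Im(z₀·conj(z₁)) : 2·Re(z₀·conj(z₁)) : i·(|z₀|²+|z₁|²)]. Then the image of s equals the set of points [x₁:x₂:x₃:x₄] ∈ ℙ³ admitting a homogeneous representative (x₁,x₂,x₃,x₄) with x₁² + x₂² + x₃² + x₄² = 0, x₁, x₂, x₃ ∈ ℝ and x₄ ∈ i·ℝ. -/
open Complex
open scoped LinearAlgebra.Projectivization

noncomputable def vAux (z : Fin 2 → ℂ) : Fin 4 → ℂ :=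
  ![((normSq (z 0) - normSq (z 1) : ℝ) : ℂ),
    ((-2 * (z 0 * (starRingEnd ℂ) (z 1)).im : ℝ) : ℂ),
    ((2 * (z 0 * (starRingEnd ℂ) (z 1)).re : ℝ) : ℂ),
    I * ((normSq (z 0) + normSq (z 1) : ℝ) : ℂ)]

lemma vAux_ne (z : Fin 2 → ℂ) (hz : z ≠ 0) : vAux z ≠ 0 := by
  intro h
  apply hz
  have h3 := congrFun h 3
  simp only [vAux, Matrix.cons_val, Pi.zero_apply, mul_eq_zero, I_ne_zero, false_or] at h3
  have h4 : normSq (z 0) + normSq (z 1) = 0 := by exact_mod_cast h3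
  have p0 := normSq_nonneg (z 0)
  have p1 := normSq_nonneg (z 1)
  have e0 : normSq (z 0) = 0 := by linarith
  have e1 : normSq (z 1) = 0 := by linarith
  funext j
  fin_cases j
  · exact normSq_eq_zero.1 e0
  · exact normSq_eq_zero.1 e1

lemma vAux_smul (a : ℂ) (z : Fin 2 → ℂ) : vAux (a • z) = ((normSq a : ℝ) : ℂ) • vAux z := by
  funext j
  fin_cases j <;> apply Complex.ext <;> simp [vAux, normSq_apply] <;> ring

lemma vAux_mk (z w : Fin 2 → ℂ) (hz : z ≠ 0) (hw : w ≠ 0) (a : ℂ) (h : a • z = w) :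
    Projectivization.mk ℂ (vAux w) (vAux_ne w hw) = Projectivization.mk ℂ (vAux z) (vAux_ne z hz) := by
  rw [Projectivization.mk_eq_mk_iff']
  exact ⟨_, by rw [← h, vAux_smul]⟩

/-- The map `s : ℙ¹ → ℙ³` sending `[z₀:z₁]` to
`[|z₀|²−|z₁|² : −2 Im(z₀ conj(z₁)) : 2 Re(z₀ conj(z₁)) : i(|z₀|²+|z₁|²)]` has image equal to
the set of points of `ℙ³` admitting a homogeneous representative `(x₁,x₂,x₃,x₄)` with
`x₁² + x₂² + x₃² + x₄² = 0`, `x₁, x₂, x₃ ∈ ℝ` and `x₄ ∈ iℝ`. -/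
theorem antidiagonal_image_is_real_locus :
    ∃ s : ℙ ℂ (Fin 2 → ℂ) → ℙ ℂ (Fin 4 → ℂ),
      (∀ (z : Fin 2 → ℂ) (hz : z ≠ 0),
        ∃ hv : (![((normSq (z 0) - normSq (z 1) : ℝ) : ℂ),
                  ((-2 * (z 0 * (starRingEnd ℂ) (z 1)).im : ℝ) : ℂ),
                  ((2 * (z 0 * (starRingEnd ℂ) (z 1)).re : ℝ) : ℂ),
                  I * ((normSq (z 0) + normSq (z 1) : ℝ) : ℂ)] : Fin 4 → ℂ) ≠ 0,
          s (Projectivization.mk ℂ z hz) =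
            Projectivization.mk ℂ
              ![((normSq (z 0) - normSq (z 1) : ℝ) : ℂ),
                ((-2 * (z 0 * (starRingEnd ℂ) (z 1)).im : ℝ) : ℂ),
                ((2 * (z 0 * (starRingEnd ℂ) (z 1)).re : ℝ) : ℂ),
                I * ((normSq (z 0) + normSq (z 1) : ℝ) : ℂ)] hv) ∧
      Set.range s =
        {p : ℙ ℂ (Fin 4 → ℂ) | ∃ (x : Fin 4 → ℂ) (hx : x ≠ 0),
          p = Projectivization.mk ℂ x hx ∧
          x 0 ^ 2 + x 1 ^ 2 + x 2 ^ 2 + x 3 ^ 2 = 0 ∧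
          (x 0).im = 0 ∧ (x 1).im = 0 ∧ (x 2).im = 0 ∧ (x 3).re = 0} := by
  refine ⟨fun p => Projectivization.mk ℂ (vAux p.rep) (vAux_ne _ p.rep_nonzero), ?_, ?_⟩
  · intro z hz
    refine ⟨vAux_ne z hz, ?_⟩
    obtain ⟨a, ha⟩ := Projectivization.exists_smul_eq_mk_rep ℂ z hz
    exact vAux_mk z _ hz (Projectivization.rep_nonzero _) (a : ℂ) ha
  · ext p
    constructor
    · rintro ⟨q, rfl⟩
      refine ⟨vAux q.rep, vAux_ne _ q.rep_nonzero, rfl, ?_, ?_, ?_, ?_, ?_⟩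
      · apply Complex.ext <;> simp [vAux, normSq_apply, pow_two] <;> ring
      all_goals simp [vAux]
    · rintro ⟨x, hx, rfl, hq, h0, h1, h2, h3⟩
      have key : ∀ (z : Fin 2 → ℂ) (_ : z ≠ 0) (c : ℂ), c • x = vAux z →
          Projectivization.mk ℂ x hx ∈ Set.range (fun p : ℙ ℂ (Fin 2 → ℂ) =>
            Projectivization.mk ℂ (vAux p.rep) (vAux_ne _ p.rep_nonzero)) := by
        intro z hz c hc
        refine ⟨Projectivization.mk ℂ z hz, ?_⟩
        obtain ⟨a, ha⟩ := Projectivization.exists_smul_eq_mk_rep ℂ z hz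
        refine (vAux_mk z _ hz (Projectivization.rep_nonzero _) (a : ℂ) ha).trans ?_
        rw [Projectivization.mk_eq_mk_iff']
        exact ⟨c, hc⟩
      have hr : (x 0).re ^ 2 + (x 1).re ^ 2 + (x 2).re ^ 2 = (x 3).im ^ 2 := by
        have := congrArg Complex.re hq
        simp [pow_two, h0, h1, h2, h3] at this
        linarith
      by_cases ht : (x 3).im + (x 0).re = 0
      · have e0 : (x 0).re = -(x 3).im := by linarith
        have e1 : (x 1).re = 0 := by rw [e0] at hr; nlinarith [sq_nonneg (x 1).re, sq_nonneg (x 2).re]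
        have e2 : (x 2).re = 0 := by rw [e0] at hr; nlinarith [sq_nonneg (x 1).re, sq_nonneg (x 2).re]
        have e3 : (x 3).im ≠ 0 := by
          intro e3
          apply hx
          funext j
          fin_cases j <;> apply Complex.ext <;> simp [*]
        refine key ![0, 1] (fun h => by simpa using congrFun h 1) (((x 3).im⁻¹ : ℝ) : ℂ) ?_
        funext j
        fin_cases j <;> apply Complex.ext <;> simp [vAux, h0, h1, h2, h3, e0, e1, e2, e3]
      · refine key ![(((x 3).im + (x 0).re : ℝ) : ℂ), ⟨(x 2).re, (x 1).re⟩] (fun h => ht ?_)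
          ((2 * ((x 3).im + (x 0).re) : ℝ) : ℂ) ?_
        · have := congrFun h 0
          simp only [Matrix.cons_val_zero, Pi.zero_apply] at this
          exact_mod_cast this
        · funext j
          fin_cases j <;> apply Complex.ext <;> simp [vAux, normSq_apply, h0, h1, h2, h3] <;> linarith
end
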